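/- Let 0 < H < 1/2 and 1/2 < α < 1. There exists a constant C > 0 (depending only on α and H) such that for every λ > 0 and every t > 0, ∫_0^t τ^{1-2H} (∫_τ^t u^{H-3/2} (u-τ)^{H-1/2} du)² (t-τ)^{2α-2} E_{α,α}(-λ (t-τ)^α)² dτ ≤ C t^{2H+2α-2}. -/

import Mathlib

open Real intervalIntegral

/-- The two-parameter Mittag-Leffler function (real arguments),
with the convention `1/Γ = 0` at the poles of `Γ` (as in Mathlib's `Real.Gamma`). -/
noncomputable def mittagLeffler (α β x : ℝ) : ℝ :=
  ∑' k : ℕ, x ^ k / Real.Gamma ((k : ℝ) * α + β)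

open Set Filter Topology MeasureTheory ProbabilityTheory

/-! The factor `E_{α,α}(-x)` is bounded for `x ≥ 0`, and the inner integral is at most a constant
times `τ ^ (2H - 1)`, so the integrand is dominated by a multiple of the Beta integrand
`τ ^ (2H - 1) * (t - τ) ^ (2α - 2)`.

For the bound on `E_{α,α}`, integrating the series termwise shows that
`y r = r ^ (α - 1) * E_{α,α}(-r ^ α)` solves `y = k - k ∗ y` for the Abel kernel
`k r = r ^ (α - 1) / Γ(α)`. Since `k (b - r) / k (t - r)` is largest at `r = 0` when `t < b`, the
history of a solution up to `t` cannot bring it down to zero at a later time `b`, unless its values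
on `[t, b]` are large compared with `y t`. Taking for `t` the maximum point of `r ^ (1 - α) * y r`
on a short interval ending at the first zero `b` excludes this, so `y` is positive. Positivity
gives `y ≤ k`, that is `E_{α,α}(-x) ≤ 1 / Γ(α)`. -/

section BetaIntegral

variable {p q s : ℝ}

lemma integral_rpow_mul_sub_rpow (hp : 0 < p) (hq : 0 < q) (hs : 0 < s) :
    ∫ x in (0 : ℝ)..s, x ^ (p - 1) * (s - x) ^ (q - 1) = s ^ (p + q - 1) * beta p q := by
  have complex_integral :
      ∫ x in (0 : ℝ)..s, (x : ℂ) ^ ((p : ℂ) - 1) * ((s : ℂ) - x) ^ ((q : ℂ) - 1) =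
        ((∫ x in (0 : ℝ)..s, x ^ (p - 1) * (s - x) ^ (q - 1) : ℝ) : ℂ) := by
    rw [← intervalIntegral.integral_ofReal]
    refine integral_congr fun x hx => ?_
    rw [uIcc_of_le hs.le] at hx
    push_cast [Complex.ofReal_cpow hx.1, Complex.ofReal_cpow (sub_nonneg.2 hx.2)]
    rfl
  apply Complex.ofReal_injective
  rw [← complex_integral, Complex.betaIntegral_scaled _ _ hs,
    Complex.betaIntegral_eq_Gamma_mul_div _ _ (by simpa) (by simpa), beta]
  push_cast [Complex.ofReal_cpow hs.le, ← Complex.Gamma_ofReal]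
  rfl

lemma intervalIntegrable_rpow_mul_sub_rpow (hp : 0 < p) (hq : 0 < q) (hs : 0 < s) :
    IntervalIntegrable (fun x => x ^ (p - 1) * (s - x) ^ (q - 1)) volume 0 s := by
  apply intervalIntegrable_of_integral_ne_zero
  rw [integral_rpow_mul_sub_rpow hp hq hs]
  exact (mul_pos (rpow_pos_of_pos hs _) (beta_pos hp hq)).ne'

end BetaIntegral

section GammaGrowth

variable {a x : ℝ}

lemma Gamma_mul_sub_one_rpow_le (ha : 0 < a) (hx : 1 < x) :
    Gamma x * (x - 1) ^ a ≤ Gamma (x + a) := by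
  have hx₁ : 0 < x - 1 := sub_pos.2 hx
  have hΓ : 0 < Gamma (x - 1) := Gamma_pos_of_pos hx₁
  have hΓx : Gamma x = (x - 1) * Gamma (x - 1) := by
    simpa using Gamma_add_one hx₁.ne'
  have slope_le := convexOn_log_Gamma.slope_mono_adjacent (x := x - 1) (y := x) (z := x + a)
    hx₁ (mem_Ioi.2 (by linarith)) (by linarith) (by linarith)
  simp only [Function.comp_apply, sub_sub_cancel, add_sub_cancel_left, div_one] at slope_le
  rw [le_div_iff₀ ha, hΓx, log_mul hx₁.ne' hΓ.ne'] at slope_le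
  rw [hΓx, ← log_le_log_iff (by positivity) (Gamma_pos_of_pos (by linarith)),
    log_mul (by positivity) (by positivity), log_mul hx₁.ne' hΓ.ne', log_rpow hx₁]
  linarith

lemma tendsto_Gamma_div_Gamma_add (ha : 0 < a) :
    Tendsto (fun x => Gamma x / Gamma (x + a)) atTop (𝓝 0) := by
  have hlim : Tendsto (fun x : ℝ => (x - 1) ^ (-a)) atTop (𝓝 0) :=
    (tendsto_rpow_neg_atTop ha).comp (tendsto_atTop_add_const_right _ (-1) tendsto_id)
  refine squeeze_zero' ?_ ?_ hlim <;> filter_upwards [eventually_gt_atTop 1] with x hx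
  · exact div_nonneg (Gamma_pos_of_pos (by linarith)).le (Gamma_pos_of_pos (by linarith)).le
  · have hx₁ : 0 < x - 1 := sub_pos.2 hx
    rw [rpow_neg hx₁.le, div_le_iff₀ (Gamma_pos_of_pos (by linarith)), ← div_eq_inv_mul,
      le_div_iff₀ (by positivity)]
    exact Gamma_mul_sub_one_rpow_le ha hx

end GammaGrowth

section MittagLeffler

variable {α β γ s : ℝ}

lemma summable_mittagLeffler (hα : 0 < α) (β x : ℝ) :
    Summable fun k : ℕ => x ^ k / Gamma (k * α + β) := by
  have harg : Tendsto (fun k : ℕ => (k : ℝ) * α + β) atTop atTop :=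
    tendsto_atTop_add_const_right _ _ (tendsto_natCast_atTop_atTop.atTop_mul_const hα)
  have hratio : Tendsto
      (fun k : ℕ => |x| * (Gamma (k * α + β) / Gamma (k * α + β + α))) atTop (𝓝 0) := by
    simpa using ((tendsto_Gamma_div_Gamma_add hα).comp harg).const_mul |x|
  refine summable_of_ratio_norm_eventually_le (r := 1 / 2) (by norm_num) ?_
  filter_upwards [hratio.eventually_le_const one_half_pos, harg.eventually_gt_atTop 0]
    with k hk hpos
  have hΓ := Gamma_pos_of_pos hpos
  have hΓα := Gamma_pos_of_pos (add_pos hpos hα)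
  calc ‖x ^ (k + 1) / Gamma ((k + 1 : ℕ) * α + β)‖
      = |x| * (Gamma (k * α + β) / Gamma (k * α + β + α)) * ‖x ^ k / Gamma (k * α + β)‖ := by
        rw [show ((k + 1 : ℕ) : ℝ) * α + β = k * α + β + α by push_cast; ring, norm_div, norm_div,
          norm_of_nonneg hΓ.le, norm_of_nonneg hΓα.le, norm_pow, norm_pow, norm_eq_abs,
          pow_succ]
        field_simp
    _ ≤ 1 / 2 * ‖x ^ k / Gamma (k * α + β)‖ := by gcongr

lemma continuous_mittagLeffler (hα : 0 < α) (β : ℝ) : Continuous (mittagLeffler α β) := by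
  refine continuous_iff_continuousAt.2 fun x => ?_
  have hball : ContinuousOn (mittagLeffler α β) (Metric.ball 0 (|x| + 1)) := by
    refine continuousOn_tsum (fun k => by fun_prop)
      (summable_mittagLeffler hα β (|x| + 1)).norm fun k z hz => ?_
    rw [norm_div, norm_div, norm_pow, norm_pow, norm_of_nonneg (by positivity : 0 ≤ |x| + 1)]
    gcongr
    exact (mem_ball_zero_iff.1 hz).le
  exact hball.continuousAt (Metric.isOpen_ball.mem_nhds (by simp))

lemma mittagLeffler_eq_add_mul (hα : 0 < α) (β x : ℝ) :
    mittagLeffler α β x = (Gamma β)⁻¹ + x * mittagLeffler α (α + β) x := by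
  rw [mittagLeffler, (summable_mittagLeffler hα β x).tsum_eq_zero_add, mittagLeffler,
    ← tsum_mul_left]
  congr 1
  · simp
  · refine tsum_congr fun k => ?_
    rw [show ((k + 1 : ℕ) : ℝ) * α + β = k * α + (α + β) by push_cast; ring, pow_succ']
    ring

lemma integral_rpow_mul_sub_rpow_mul_pow_div_Gamma (hα : 0 ≤ α) (hβ : 0 < β) (hγ : 0 < γ)
    (hs : 0 < s) (c : ℝ) (k : ℕ) :
    ∫ r in (0 : ℝ)..s, r ^ (β - 1) * (s - r) ^ (γ - 1) * ((c * r ^ α) ^ k / Gamma (k * α + β)) =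
      Gamma γ * s ^ (β + γ - 1) * ((c * s ^ α) ^ k / Gamma (k * α + (β + γ))) := by
  have hkβ : 0 < k * α + β := by positivity
  have rpow_mul_pow {r : ℝ} (hr : 0 < r) (δ : ℝ) :
      r ^ δ * (r ^ α) ^ k = r ^ (k * α + δ) := by
    rw [← rpow_natCast, ← rpow_mul hr.le, ← rpow_add hr]
    ring_nf
  calc _ = ∫ r in (0 : ℝ)..s,
          c ^ k / Gamma (k * α + β) * (r ^ (k * α + β - 1) * (s - r) ^ (γ - 1)) := by
        refine integral_congr_Ioo_of_le hs.le fun r hr => ?_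
        simp only [add_sub_assoc, ← rpow_mul_pow hr.1]
        ring
    _ = c ^ k / Gamma (k * α + β) * (s ^ (k * α + (β + γ - 1)) * beta (k * α + β) γ) := by
        rw [intervalIntegral.integral_const_mul, integral_rpow_mul_sub_rpow hkβ hγ hs]
        ring_nf
    _ = _ := by
        have := (Gamma_pos_of_pos hkβ).ne'
        rw [← rpow_mul_pow hs, beta, mul_pow, add_assoc]
        field_simp

theorem integral_rpow_mul_sub_rpow_mul_mittagLeffler (hα : 0 < α) (hβ : 0 < β) (hγ : 0 < γ)
    (hs : 0 < s) (c : ℝ) :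
    ∫ r in (0 : ℝ)..s, r ^ (β - 1) * (s - r) ^ (γ - 1) * mittagLeffler α β (c * r ^ α) =
      Gamma γ * s ^ (β + γ - 1) * mittagLeffler α (β + γ) (c * s ^ α) := by
  set F : ℝ → ℕ → ℝ → ℝ := fun d k r =>
    r ^ (β - 1) * (s - r) ^ (γ - 1) * ((d * r ^ α) ^ k / Gamma (k * α + β)) with hF
  have integral_F (d : ℝ) (k : ℕ) : ∫ r in Ioc 0 s, F d k r =
      Gamma γ * s ^ (β + γ - 1) * ((d * s ^ α) ^ k / Gamma (k * α + (β + γ))) := by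
    rw [← integral_of_le hs.le]
    exact integral_rpow_mul_sub_rpow_mul_pow_div_Gamma hα.le hβ hγ hs d k
  have integrable_F (k : ℕ) : Integrable (F c k) (volume.restrict (Ioc 0 s)) := by
    refine ((intervalIntegrable_rpow_mul_sub_rpow hβ hγ hs).mul_continuousOn ?_).1
    exact ((((continuous_rpow_const hα.le).const_mul c).pow k).div_const _).continuousOn
  have norm_F (k : ℕ) : ∫ r in Ioc 0 s, ‖F c k r‖ = ∫ r in Ioc 0 s, F |c| k r := by
    refine setIntegral_congr_fun measurableSet_Ioc fun r hr => ?_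
    have := Gamma_pos_of_pos (show 0 < k * α + β by positivity)
    have := rpow_nonneg hr.1.le
    have := rpow_nonneg (sub_nonneg.2 hr.2)
    simp only [norm_mul, norm_div, norm_pow, norm_eq_abs, abs_of_nonneg, *, le_of_lt]
  have summable_norm : Summable fun k => ∫ r in Ioc 0 s, ‖F c k r‖ := by
    simp_rw [norm_F, integral_F]
    exact (summable_mittagLeffler hα _ _).mul_left _
  have tsum_integral :=
    (hasSum_integral_of_summable_integral_norm integrable_F summable_norm).tsum_eq
  simp_rw [integral_F, hF, tsum_mul_left] at tsum_integral
  rw [integral_of_le hs.le]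
  exact tsum_integral.symm

end MittagLeffler

lemma exists_first_nonpos {g : ℝ → ℝ} {a s : ℝ} (hg : Continuous g) (hga : 0 < g a)
    (has : a ≤ s) (hgs : g s ≤ 0) : ∃ b, a < b ∧ g b ≤ 0 ∧ ∀ r ∈ Ico a b, 0 < g r := by
  obtain ⟨b, ⟨⟨hab, hbs⟩, hgb⟩, hleast⟩ :=
    (isCompact_Icc.inter_right (isClosed_Iic.preimage hg)).exists_isLeast
      (⟨s, ⟨has, le_rfl⟩, hgs⟩ : (Icc a s ∩ g ⁻¹' Iic 0).Nonempty)
  refine ⟨b, hab.lt_of_ne ?_, hgb, fun r hr => ?_⟩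
  · rintro rfl
    exact hga.not_ge hgb
  · by_contra! hgr
    exact hr.2.not_ge (hleast ⟨⟨hr.1, hr.2.le.trans hbs⟩, hgr⟩)

/-- `r ↦ r ^ (α - 1) * g r` is the resolvent of the Abel kernel `k r = r ^ (α - 1) / c`, that is, a
solution `y` of `y = k - k ∗ y`. The singular factor `r ^ (α - 1)` is split off, so that `g` is
continuous up to `0`, and the equation is multiplied by `c`. -/
structure IsAbelResolvent (α c : ℝ) (g : ℝ → ℝ) : Prop where
  continuous : Continuous g
  mul_apply_zero : c * g 0 = 1
  integral_eq : ∀ s, 0 < s →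
    ∫ r in (0 : ℝ)..s, r ^ (α - 1) * (s - r) ^ (α - 1) * g r = s ^ (α - 1) * (1 - c * g s)

lemma sub_rpow_le_div_mul_sub_rpow {p r t b : ℝ} (hp : p ≤ 0) (hr : 0 ≤ r) (hrt : r < t)
    (htb : t ≤ b) : (b - r) ^ p ≤ b ^ p / t ^ p * (t - r) ^ p := by
  have ht : 0 < t := hr.trans_lt hrt
  have htr : 0 < t - r := sub_pos.2 hrt
  rw [div_mul_eq_mul_div, le_div_iff₀ (rpow_pos_of_pos ht _), ← mul_rpow (by linarith) ht.le,
    ← mul_rpow (by linarith) htr.le]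
  exact rpow_le_rpow_of_nonpos (mul_pos (by linarith) htr) (by nlinarith) hp

namespace IsAbelResolvent

variable {α c s t b M : ℝ} {g : ℝ → ℝ}

lemma intervalIntegrable (h : IsAbelResolvent α c g) (hα : 0 < α) (hb : 0 < b) :
    IntervalIntegrable (fun r => r ^ (α - 1) * (b - r) ^ (α - 1) * g r) volume 0 b :=
  (intervalIntegrable_rpow_mul_sub_rpow hα hα hb).mul_continuousOn h.continuous.continuousOn

lemma intervalIntegrable_left (h : IsAbelResolvent α c g) (hα : 0 < α) (ht : 0 < t) (htb : t ≤ b) :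
    IntervalIntegrable (fun r => r ^ (α - 1) * (b - r) ^ (α - 1) * g r) volume 0 t :=
  (h.intervalIntegrable hα (ht.trans_le htb)).mono_set
    (uIcc_subset_uIcc_left (by simp [uIcc_of_le (ht.le.trans htb), ht.le, htb]))

lemma intervalIntegrable_right (h : IsAbelResolvent α c g) (hα : 0 < α) (ht : 0 < t) (htb : t ≤ b) :
    IntervalIntegrable (fun r => r ^ (α - 1) * (b - r) ^ (α - 1) * g r) volume t b :=
  (h.intervalIntegrable hα (ht.trans_le htb)).mono_set
    (uIcc_subset_uIcc_right (by simp [uIcc_of_le (ht.le.trans htb), ht.le, htb]))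

lemma integral_left_le (h : IsAbelResolvent α c g) (hα : 0 < α) (hα' : α ≤ 1) (ht : 0 < t)
    (htb : t ≤ b) (hg : ∀ r ∈ Ioo 0 t, 0 ≤ g r) :
    ∫ r in (0 : ℝ)..t, r ^ (α - 1) * (b - r) ^ (α - 1) * g r ≤ b ^ (α - 1) * (1 - c * g t) := by
  calc _ ≤ ∫ r in (0 : ℝ)..t,
          b ^ (α - 1) / t ^ (α - 1) * (r ^ (α - 1) * (t - r) ^ (α - 1) * g r) := by
        refine integral_mono_on_of_le_Ioo ht.le (h.intervalIntegrable_left hα ht htb)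
          ((h.intervalIntegrable hα ht).const_mul _) fun r hr => ?_
        have hkernel := sub_rpow_le_div_mul_sub_rpow (sub_nonpos.2 hα') hr.1.le hr.2 htb
        have hr₀ : 0 ≤ r ^ (α - 1) := rpow_nonneg hr.1.le _
        have hgr : 0 ≤ g r := hg r hr
        calc _ ≤ r ^ (α - 1) * (b ^ (α - 1) / t ^ (α - 1) * (t - r) ^ (α - 1)) * g r := by gcongr
          _ = _ := by ring
    _ = b ^ (α - 1) * (1 - c * g t) := by
        have := (rpow_pos_of_pos ht (α - 1)).ne'
        rw [intervalIntegral.integral_const_mul, h.integral_eq t ht]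
        field_simp

lemma mul_le_integral_right (h : IsAbelResolvent α c g) (hα : 0 < α) (hα' : α ≤ 1) (hc : 0 ≤ c)
    (ht : 0 < t) (htb : t ≤ b) (hg : ∀ r ∈ Ioo 0 t, 0 ≤ g r) (hgb : g b ≤ 0) :
    c * b ^ (α - 1) * g t ≤ ∫ r in t..b, r ^ (α - 1) * (b - r) ^ (α - 1) * g r := by
  have hb : 0 < b := ht.trans_le htb
  have hsplit := integral_add_adjacent_intervals (h.intervalIntegrable_left hα ht htb)
    (h.intervalIntegrable_right hα ht htb)
  have hleft := h.integral_left_le hα hα' ht htb hg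
  have hnonpos : b ^ (α - 1) * (c * g b) ≤ 0 := mul_nonpos_of_nonneg_of_nonpos
    (rpow_nonneg hb.le _) (mul_nonpos_of_nonneg_of_nonpos hc hgb)
  rw [h.integral_eq b hb] at hsplit
  linarith

lemma integral_right_le (h : IsAbelResolvent α c g) (hα : 0 < α) (hα' : α ≤ 1) (ht : 0 < t)
    (htb : t ≤ b) (hM : 0 ≤ M) (hg : ∀ r ∈ Icc t b, g r ≤ M) :
    ∫ r in t..b, r ^ (α - 1) * (b - r) ^ (α - 1) * g r ≤
      t ^ (α - 1) * ((b - t) ^ α / α) * M := by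
  have hint : IntervalIntegrable (fun r : ℝ => (b - r) ^ (α - 1)) volume t b := by
    simpa using (intervalIntegrable_rpow' (a := b - t) (b := 0)
      (show -1 < α - 1 by linarith)).comp_sub_left b
  calc _ ≤ ∫ r in t..b, t ^ (α - 1) * M * (b - r) ^ (α - 1) := by
        refine integral_mono_on htb (h.intervalIntegrable_right hα ht htb) (hint.const_mul _)
          fun r hr => ?_
        have hr₀ : 0 ≤ r := ht.le.trans hr.1
        have hrt : r ^ (α - 1) ≤ t ^ (α - 1) :=
          rpow_le_rpow_of_nonpos ht hr.1 (sub_nonpos.2 hα')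
        have hbr : 0 ≤ (b - r) ^ (α - 1) := rpow_nonneg (sub_nonneg.2 hr.2) _
        calc _ ≤ r ^ (α - 1) * (b - r) ^ (α - 1) * M := by gcongr; exact hg r hr
          _ ≤ t ^ (α - 1) * (b - r) ^ (α - 1) * M := by gcongr
          _ = _ := by ring
    _ = _ := by
        rw [intervalIntegral.integral_const_mul, integral_comp_sub_left (fun r => r ^ (α - 1)),
          sub_self, integral_rpow (Or.inl (by linarith)), sub_add_cancel, zero_rpow hα.ne']
        ring

theorem pos (h : IsAbelResolvent α c g) (hα : 0 < α) (hα' : α ≤ 1) (hc : 0 < c) (hs : 0 ≤ s) :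
    0 < g s := by
  by_contra! hgs
  have hg₀ : 0 < g 0 := pos_of_mul_pos_right (h.mul_apply_zero ▸ one_pos) hc.le
  obtain ⟨b, hb, hgb, hpos⟩ := exists_first_nonpos h.continuous hg₀ hs hgs
  obtain ⟨a, ha, hab, hsmall⟩ : ∃ a, 0 < a ∧ a < b ∧
      ∀ t ∈ Icc a b, t ^ (α - 1) * ((b - t) ^ α / α) < c * b ^ (α - 1) := by
    have hcont : ContinuousAt (fun t => t ^ (α - 1) * ((b - t) ^ α / α)) b :=
      (continuousAt_rpow_const b _ (Or.inl hb.ne')).mul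
        (((continuousAt_const.sub continuousAt_id).rpow_const (Or.inr hα.le)).div_const _)
    have hlt : b ^ (α - 1) * ((b - b) ^ α / α) < c * b ^ (α - 1) := by
      rw [sub_self, zero_rpow hα.ne', zero_div, mul_zero]
      positivity
    obtain ⟨a, hab, hsub⟩ := nhdsLE_basis_Icc.mem_iff.1 (mem_nhdsWithin_of_mem_nhds
      ((eventually_gt_nhds hb).and (hcont.eventually_lt_const hlt)))
    exact ⟨a, (hsub (left_mem_Icc.2 hab.le)).1, hab, fun t ht => (hsub ht).2⟩
  obtain ⟨t, ht, hmax⟩ := isCompact_Icc.exists_isMaxOn (nonempty_Icc.2 hab.le)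
    h.continuous.continuousOn
  have hgt : 0 < g t := (hpos a ⟨ha.le, hab⟩).trans_le (hmax (left_mem_Icc.2 hab.le))
  have ht₀ : 0 < t := ha.trans_le ht.1
  have hlower := h.mul_le_integral_right hα hα' hc.le ht₀ ht.2
    (fun r hr => (hpos r ⟨hr.1.le, hr.2.trans_le ht.2⟩).le) hgb
  have hupper := h.integral_right_le hα hα' ht₀ ht.2 hgt.le
    fun r hr => hmax ⟨ht.1.trans hr.1, hr.2⟩
  exact (hsmall t ht).not_ge (le_of_mul_le_mul_right (hlower.trans hupper) hgt)

theorem mul_le_one (h : IsAbelResolvent α c g) (hα : 0 < α) (hα' : α ≤ 1) (hc : 0 < c)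
    (hs : 0 ≤ s) : c * g s ≤ 1 := by
  obtain rfl | hs := hs.eq_or_lt
  · exact h.mul_apply_zero.le
  have hnonneg : 0 ≤ ∫ r in (0 : ℝ)..s, r ^ (α - 1) * (s - r) ^ (α - 1) * g r :=
    integral_nonneg hs.le fun r hr => mul_nonneg
      (mul_nonneg (rpow_nonneg hr.1 _) (rpow_nonneg (sub_nonneg.2 hr.2) _))
      (h.pos hα hα' hc hr.1).le
  rw [h.integral_eq s hs] at hnonneg
  exact sub_nonneg.1 (nonneg_of_mul_nonneg_right hnonneg (rpow_pos_of_pos hs _))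

end IsAbelResolvent

section MittagLefflerBound

variable {α x : ℝ}

lemma isAbelResolvent_mittagLeffler (hα : 0 < α) :
    IsAbelResolvent α (Gamma α) fun r => mittagLeffler α α (-r ^ α) where
  continuous := (continuous_mittagLeffler hα α).comp (continuous_rpow_const hα.le).neg
  mul_apply_zero := by
    rw [zero_rpow hα.ne', neg_zero, mittagLeffler_eq_add_mul hα, zero_mul, add_zero,
      mul_inv_cancel₀ (Gamma_pos_of_pos hα).ne']
  integral_eq s hs := by
    have hconv := integral_rpow_mul_sub_rpow_mul_mittagLeffler hα hα hα hs (-1)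
    simp only [neg_one_mul] at hconv
    have := (Gamma_pos_of_pos hα).ne'
    rw [hconv, mittagLeffler_eq_add_mul hα α, show α + α - 1 = (α - 1) + α by ring, rpow_add hs]
    field_simp
    ring

theorem abs_mittagLeffler_neg_le (hα : 0 < α) (hα' : α ≤ 1) (hx : 0 ≤ x) :
    |mittagLeffler α α (-x)| ≤ (Gamma α)⁻¹ := by
  have hΓ : 0 < Gamma α := Gamma_pos_of_pos hα
  have hs : 0 ≤ x ^ α⁻¹ := rpow_nonneg hx _
  have hres := isAbelResolvent_mittagLeffler hα
  have hpos := hres.pos hα hα' hΓ hs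
  have hle := hres.mul_le_one hα hα' hΓ hs
  rw [rpow_inv_rpow hx hα.ne'] at hpos hle
  rwa [abs_of_pos hpos, ← one_div, le_div_iff₀' hΓ]

end MittagLefflerBound

section InnerIntegral

variable {p q τ t : ℝ}

lemma add_rpow_mul_rpow_le_rpow_mul_rpow (hp : p ≤ 0) (hτ : 0 < τ) {v : ℝ} (hv : 0 ≤ v) :
    (v + τ) ^ p * v ^ q ≤ τ ^ p * v ^ q :=
  mul_le_mul_of_nonneg_right (rpow_le_rpow_of_nonpos hτ (by linarith) hp) (rpow_nonneg hv _)

lemma add_rpow_mul_rpow_le_rpow_add (hp : p ≤ 0) (hτ : 0 ≤ τ) {v : ℝ} (hv : 0 < v) :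
    (v + τ) ^ p * v ^ q ≤ v ^ (p + q) := by
  rw [rpow_add hv]
  exact mul_le_mul_of_nonneg_right (rpow_le_rpow_of_nonpos hv (by linarith) hp)
    (rpow_nonneg hv.le _)

lemma integrableOn_add_rpow_mul_rpow_of_le {f : ℝ → ℝ} {s : Set ℝ} (hτ : 0 ≤ τ)
    (hs : MeasurableSet s) (hf : IntegrableOn f s) (hs₀ : s ⊆ Ioi 0)
    (hle : ∀ v ∈ s, (v + τ) ^ p * v ^ q ≤ f v) :
    IntegrableOn (fun v => (v + τ) ^ p * v ^ q) s := by
  refine hf.mono' (by fun_prop) ((ae_restrict_mem hs).mono fun v hv => ?_)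
  have hv₀ : 0 < v := hs₀ hv
  rw [norm_of_nonneg (by positivity)]
  exact hle v hv

lemma integrableOn_Ioc_rpow_zero (hq : -1 < q) (hτ : 0 ≤ τ) :
    IntegrableOn (fun v : ℝ => v ^ q) (Ioc 0 τ) :=
  (intervalIntegrable_iff_integrableOn_Ioc_of_le hτ).1 (intervalIntegrable_rpow' hq)

lemma integrableOn_Ioc_add_rpow_mul_rpow (hp : p ≤ 0) (hq : -1 < q) (hτ : 0 < τ) :
    IntegrableOn (fun v => (v + τ) ^ p * v ^ q) (Ioc 0 τ) :=
  integrableOn_add_rpow_mul_rpow_of_le hτ.le measurableSet_Ioc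
    ((integrableOn_Ioc_rpow_zero hq hτ.le).const_mul _) Ioc_subset_Ioi_self
    fun _ hv => add_rpow_mul_rpow_le_rpow_mul_rpow hp hτ hv.1.le

lemma integrableOn_Ioi_add_rpow_mul_rpow (hp : p ≤ 0) (hpq : p + q < -1) (hτ : 0 < τ) :
    IntegrableOn (fun v => (v + τ) ^ p * v ^ q) (Ioi τ) :=
  integrableOn_add_rpow_mul_rpow_of_le hτ.le measurableSet_Ioi
    (integrableOn_Ioi_rpow_of_lt hpq hτ) (Ioi_subset_Ioi hτ.le)
    fun _ hv => add_rpow_mul_rpow_le_rpow_add hp hτ.le (hτ.trans hv)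

lemma setIntegral_Ioc_add_rpow_mul_rpow_le (hp : p ≤ 0) (hq : -1 < q) (hτ : 0 < τ) :
    ∫ v in Ioc 0 τ, (v + τ) ^ p * v ^ q ≤ (q + 1)⁻¹ * τ ^ (p + q + 1) := by
  calc _ ≤ ∫ v in Ioc 0 τ, τ ^ p * v ^ q :=
        setIntegral_mono_on (integrableOn_Ioc_add_rpow_mul_rpow hp hq hτ)
          ((integrableOn_Ioc_rpow_zero hq hτ.le).const_mul _) measurableSet_Ioc
          fun _ hv => add_rpow_mul_rpow_le_rpow_mul_rpow hp hτ hv.1.le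
    _ = (q + 1)⁻¹ * τ ^ (p + q + 1) := by
        rw [MeasureTheory.integral_const_mul, ← integral_of_le hτ.le, integral_rpow (Or.inl hq),
          zero_rpow (by linarith), show p + q + 1 = p + (q + 1) by ring, rpow_add hτ p (q + 1)]
        ring

lemma setIntegral_Ioi_add_rpow_mul_rpow_le (hp : p ≤ 0) (hpq : p + q < -1) (hτ : 0 < τ) :
    ∫ v in Ioi τ, (v + τ) ^ p * v ^ q ≤ -(p + q + 1)⁻¹ * τ ^ (p + q + 1) := by
  calc _ ≤ ∫ v in Ioi τ, v ^ (p + q) :=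
        setIntegral_mono_on (integrableOn_Ioi_add_rpow_mul_rpow hp hpq hτ)
          (integrableOn_Ioi_rpow_of_lt hpq hτ) measurableSet_Ioi
          fun _ hv => add_rpow_mul_rpow_le_rpow_add hp hτ.le (hτ.trans hv)
    _ = -(p + q + 1)⁻¹ * τ ^ (p + q + 1) := by
        rw [integral_Ioi_rpow_of_lt hpq hτ]
        ring

theorem abs_integral_rpow_mul_sub_rpow_le (hp : p ≤ 0) (hq : -1 < q) (hpq : p + q < -1)
    (hτ : 0 < τ) (hτt : τ ≤ t) :
    |∫ u in τ..t, u ^ p * (u - τ) ^ q| ≤ ((q + 1)⁻¹ - (p + q + 1)⁻¹) * τ ^ (p + q + 1) := by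
  have hshift : ∫ u in τ..t, u ^ p * (u - τ) ^ q = ∫ v in Ioc 0 (t - τ), (v + τ) ^ p * v ^ q := by
    have := integral_comp_sub_right (a := τ) (b := t) (fun v => (v + τ) ^ p * v ^ q) τ
    simpa only [sub_add_cancel, sub_self, integral_of_le (sub_nonneg.2 hτt)] using this
  have hnonneg : ∀ v ∈ Ioi (0 : ℝ), 0 ≤ (v + τ) ^ p * v ^ q := fun v (hv : 0 < v) => by positivity
  have hnear := integrableOn_Ioc_add_rpow_mul_rpow hp hq hτ
  have hfar := integrableOn_Ioi_add_rpow_mul_rpow hp hpq hτ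
  have hunion := Ioc_union_Ioi_eq_Ioi hτ.le
  rw [hshift, abs_of_nonneg
    (setIntegral_nonneg measurableSet_Ioc fun v hv => hnonneg v (Ioc_subset_Ioi_self hv))]
  calc _ ≤ ∫ v in Ioi 0, (v + τ) ^ p * v ^ q :=
        setIntegral_mono_set (hunion ▸ hnear.union hfar)
          ((ae_restrict_mem measurableSet_Ioi).mono hnonneg) Ioc_subset_Ioi_self.eventuallyLE
    _ = (∫ v in Ioc 0 τ, (v + τ) ^ p * v ^ q) + ∫ v in Ioi τ, (v + τ) ^ p * v ^ q := by
        rw [← setIntegral_union (Ioc_disjoint_Ioi le_rfl) measurableSet_Ioi hnear hfar, hunion]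
    _ ≤ (q + 1)⁻¹ * τ ^ (p + q + 1) + -(p + q + 1)⁻¹ * τ ^ (p + q + 1) :=
        add_le_add (setIntegral_Ioc_add_rpow_mul_rpow_le hp hq hτ)
          (setIntegral_Ioi_add_rpow_mul_rpow_le hp hpq hτ)
    _ = _ := by ring

end InnerIntegral

theorem integral_rpow_mul_sq_mul_sub_rpow_mul_sq_le {a b t A B : ℝ} {J m : ℝ → ℝ} (ha : 0 < a)
    (hb : 0 < b) (ht : 0 < t) (hJ : ∀ τ ∈ Ioc 0 t, |J τ| ≤ A * τ ^ (a - 1))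
    (hm : ∀ τ ∈ Ioc 0 t, |m τ| ≤ B) :
    ∫ τ in (0 : ℝ)..t, τ ^ (1 - a) * J τ ^ 2 * (t - τ) ^ (b - 1) * m τ ^ 2 ≤
      A ^ 2 * B ^ 2 * beta a b * t ^ (a + b - 1) := by
  have hnonneg {τ : ℝ} (hτ : τ ∈ Ioc 0 t) : 0 ≤ τ ^ (1 - a) ∧ 0 ≤ (t - τ) ^ (b - 1) :=
    ⟨rpow_nonneg hτ.1.le _, rpow_nonneg (sub_nonneg.2 hτ.2) _⟩
  calc _ ≤ ∫ τ in (0 : ℝ)..t, A ^ 2 * B ^ 2 * (τ ^ (a - 1) * (t - τ) ^ (b - 1)) := by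
        rw [integral_of_le ht.le, integral_of_le ht.le]
        refine integral_mono_of_nonneg
          ((ae_restrict_mem measurableSet_Ioc).mono fun τ hτ => ?_)
          ((intervalIntegrable_rpow_mul_sub_rpow ha hb ht).const_mul _).1
          ((ae_restrict_mem measurableSet_Ioc).mono fun τ hτ => ?_) <;>
          obtain ⟨hτa, htb⟩ := hnonneg hτ
        · positivity
        have hJ_sq : J τ ^ 2 ≤ (A * τ ^ (a - 1)) ^ 2 := sq_le_sq.2 ((hJ τ hτ).trans (le_abs_self _))
        have hm_sq : m τ ^ 2 ≤ B ^ 2 := sq_le_sq.2 ((hm τ hτ).trans (le_abs_self _))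
        have hcancel : τ ^ (1 - a) * τ ^ (a - 1) = 1 := by
          rw [← rpow_add hτ.1, sub_add_sub_cancel', sub_self, rpow_zero]
        beta_reduce
        calc _ ≤ τ ^ (1 - a) * (A * τ ^ (a - 1)) ^ 2 * (t - τ) ^ (b - 1) * B ^ 2 := by gcongr
          _ = _ := by
            linear_combination A ^ 2 * B ^ 2 * τ ^ (a - 1) * (t - τ) ^ (b - 1) * hcancel
    _ = _ := by
        rw [intervalIntegral.integral_const_mul, integral_rpow_mul_sub_rpow ha hb ht]
        ring

theorem I2_bound (α H : ℝ) (hH0 : 0 < H) (hH1 : H < 1/2)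
    (hα0 : 1/2 < α) (hα1 : α < 1) :
    ∃ C : ℝ, 0 < C ∧ ∀ lam t : ℝ, 0 < lam → 0 < t →
      (∫ τ in (0:ℝ)..t, τ ^ (1 - 2*H)
          * (∫ u in τ..t, u ^ (H - 3/2) * (u - τ) ^ (H - 1/2)) ^ 2
          * (t - τ) ^ (2*α - 2) * (mittagLeffler α α (-lam * (t - τ) ^ α)) ^ 2)
        ≤ C * t ^ (2*H + 2*α - 2) := by
  have hα : 0 < α := by linarith
  have ha : 0 < 2 * H := by linarith
  have hb : 0 < 2 * α - 1 := by linarith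
  have hA : 0 < (H + 1 / 2)⁻¹ - (2 * H - 1)⁻¹ :=
    sub_pos.2 ((inv_lt_zero.2 (by linarith)).trans (inv_pos.2 (by linarith)))
  refine ⟨((H + 1 / 2)⁻¹ - (2 * H - 1)⁻¹) ^ 2 * (Gamma α)⁻¹ ^ 2 * beta (2 * H) (2 * α - 1),
    mul_pos (by positivity) (beta_pos ha hb), fun lam t hlam ht => ?_⟩
  have inner_le : ∀ τ ∈ Ioc 0 t, |∫ u in τ..t, u ^ (H - 3 / 2) * (u - τ) ^ (H - 1 / 2)| ≤
      ((H + 1 / 2)⁻¹ - (2 * H - 1)⁻¹) * τ ^ (2 * H - 1) := fun τ hτ => by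
    convert abs_integral_rpow_mul_sub_rpow_le (p := H - 3 / 2) (q := H - 1 / 2) (by linarith)
      (by linarith) (by linarith) hτ.1 hτ.2 using 4 <;> ring
  have mittagLeffler_le : ∀ τ ∈ Ioc 0 t,
      |mittagLeffler α α (-lam * (t - τ) ^ α)| ≤ (Gamma α)⁻¹ := fun τ hτ => by
    rw [neg_mul]
    exact abs_mittagLeffler_neg_le hα hα1.le
      (mul_nonneg hlam.le (rpow_nonneg (sub_nonneg.2 hτ.2) _))
  rw [show 2 * α - 2 = 2 * α - 1 - 1 by ring,
    show 2 * H + 2 * α - 2 = 2 * H + (2 * α - 1) - 1 by ring]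
  exact integral_rpow_mul_sq_mul_sub_rpow_mul_sq_le ha hb ht inner_le mittagLeffler_le
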